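/- Under the decoy-state assumptions, Q(ν₁)·e^{ν₁} − Q(ν₂)·e^{ν₂} ≤ (ν₁ − ν₂)·Y(1) + ((ν₁² − ν₂²)/μ²)·(Q(μ)·e^{μ} − Y(0) − μ·Y(1)). -/

import Mathlib

/-- The gain for intensity `m` with yields `Y`: Poisson average of the yields. -/
noncomputable def decoyGain (Y : ℕ → ℝ) (m : ℝ) : ℝ :=
  ∑' i : ℕ, Real.exp (-m) * m ^ i / (Nat.factorial i) * Y i

/-!
Multiplying the gain by `exp m` turns it into the power series with coefficients `Y i / i!`. For
`0 ≤ y ≤ x` the recurrence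
`x ^ (n + 2) - y ^ (n + 2) = (x + y) * (x ^ (n + 1) - y ^ (n + 1)) - x * y * (x ^ n - y ^ n)`
shows that the differences `x ^ n - y ^ n` grow by a factor of at most `x + y` per degree. So if
`x + y ≤ c`, the terms of degree at least two in the difference of the series at `x` and `y` are at
most `(x ^ 2 - y ^ 2) / c ^ 2` times the corresponding terms of the series at `c`.
-/

open scoped Nat

section PowDifferences

variable {R : Type*} [CommRing R] [PartialOrder R] [IsOrderedRing R] {x y c : R}

theorem pow_add_two_sub_pow_add_two_le (hy : 0 ≤ y) (hyx : y ≤ x) (n : ℕ) :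
    x ^ (n + 2) - y ^ (n + 2) ≤ (x + y) * (x ^ (n + 1) - y ^ (n + 1)) := by
  have cross_nonneg : 0 ≤ x * y * (x ^ n - y ^ n) :=
    mul_nonneg (mul_nonneg (hy.trans hyx) hy) (sub_nonneg.2 (pow_le_pow_left₀ hy hyx n))
  calc x ^ (n + 2) - y ^ (n + 2)
      = (x + y) * (x ^ (n + 1) - y ^ (n + 1)) - x * y * (x ^ n - y ^ n) := by ring
    _ ≤ (x + y) * (x ^ (n + 1) - y ^ (n + 1)) := sub_le_self _ cross_nonneg

theorem pow_add_sub_pow_add_le_mul_pow (hy : 0 ≤ y) (hyx : y ≤ x) (hc : x + y ≤ c)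
    {k : ℕ} (hk : k ≠ 0) (n : ℕ) :
    x ^ (n + k) - y ^ (n + k) ≤ (x ^ k - y ^ k) * c ^ n := by
  obtain ⟨k, rfl⟩ := Nat.exists_eq_succ_of_ne_zero hk
  have c_nonneg : 0 ≤ c := (add_nonneg (hy.trans hyx) hy).trans hc
  induction n with
  | zero => simp
  | succ n ih =>
    have diff_nonneg : 0 ≤ x ^ (n + k + 1) - y ^ (n + k + 1) :=
      sub_nonneg.2 (pow_le_pow_left₀ hy hyx _)
    calc x ^ (n + 1 + (k + 1)) - y ^ (n + 1 + (k + 1))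
        = x ^ (n + k + 2) - y ^ (n + k + 2) := by ring
      _ ≤ (x + y) * (x ^ (n + k + 1) - y ^ (n + k + 1)) :=
        pow_add_two_sub_pow_add_two_le hy hyx (n + k)
      _ ≤ c * (x ^ (n + k + 1) - y ^ (n + k + 1)) := mul_le_mul_of_nonneg_right hc diff_nonneg
      _ ≤ c * ((x ^ (k + 1) - y ^ (k + 1)) * c ^ n) := mul_le_mul_of_nonneg_left ih c_nonneg
      _ = (x ^ (k + 1) - y ^ (k + 1)) * c ^ (n + 1) := by ring

end PowDifferences

section PowerSeries

variable {a : ℕ → ℝ} {x y c : ℝ}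

theorem summable_mul_pow_of_abs_le (ha : Summable fun i ↦ a i * c ^ i) (hx : |x| ≤ |c|) :
    Summable fun i ↦ a i * x ^ i := by
  refine Summable.of_norm_bounded ha.norm fun i ↦ ?_
  simp only [norm_mul, norm_pow, Real.norm_eq_abs]
  gcongr

theorem tsum_mul_pow_eq_add_tsum_nat_add_two (ha : Summable fun i ↦ a i * x ^ i) :
    ∑' i, a i * x ^ i = a 0 + x * a 1 + ∑' i, a (i + 2) * x ^ (i + 2) := by
  rw [← ha.sum_add_tsum_nat_add 2]
  simp [Finset.sum_range_succ, mul_comm]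

theorem tsum_nat_add_mul_pow_sub_le {k : ℕ} (hk : k ≠ 0) (ha : ∀ i, k ≤ i → 0 ≤ a i)
    (hs : Summable fun i ↦ a i * c ^ i) (hy : 0 ≤ y) (hyx : y ≤ x) (hxy : x + y ≤ c)
    (hc : 0 < c) :
    ∑' i, a (i + k) * x ^ (i + k) - ∑' i, a (i + k) * y ^ (i + k) ≤
      (x ^ k - y ^ k) / c ^ k * ∑' i, a (i + k) * c ^ (i + k) := by
  have tail_summable {z : ℝ} (hz : 0 ≤ z) (hzc : z ≤ c) :
      Summable fun i ↦ a (i + k) * z ^ (i + k) :=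
    (summable_nat_add_iff k).2 (summable_mul_pow_of_abs_le hs (abs_le_abs_of_nonneg hz hzc))
  have hx_summable := tail_summable (hy.trans hyx) (by linarith)
  have hy_summable := tail_summable hy (by linarith)
  rw [← hx_summable.tsum_sub hy_summable, ← tsum_mul_left]
  refine (hx_summable.sub hy_summable).tsum_le_tsum (fun i ↦ ?_)
    ((tail_summable hc.le le_rfl).mul_left _)
  calc a (i + k) * x ^ (i + k) - a (i + k) * y ^ (i + k)
      = a (i + k) * (x ^ (i + k) - y ^ (i + k)) := by ring
    _ ≤ a (i + k) * ((x ^ k - y ^ k) * c ^ i) :=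
      mul_le_mul_of_nonneg_left (pow_add_sub_pow_add_le_mul_pow hy hyx hxy hk i)
        (ha _ (Nat.le_add_left k i))
    _ = (x ^ k - y ^ k) / c ^ k * (a (i + k) * c ^ (i + k)) := by
      rw [pow_add c]
      field_simp

theorem tsum_mul_pow_sub_le (ha : ∀ i, 2 ≤ i → 0 ≤ a i)
    (hs : Summable fun i ↦ a i * c ^ i) (hy : 0 ≤ y) (hyx : y ≤ x) (hxy : x + y ≤ c)
    (hc : 0 < c) :
    ∑' i, a i * x ^ i - ∑' i, a i * y ^ i ≤
      (x - y) * a 1 + (x ^ 2 - y ^ 2) / c ^ 2 * (∑' i, a i * c ^ i - a 0 - c * a 1) := by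
  have series_split {z : ℝ} (hz : 0 ≤ z) (hzc : z ≤ c) :
      ∑' i, a i * z ^ i = a 0 + z * a 1 + ∑' i, a (i + 2) * z ^ (i + 2) :=
    tsum_mul_pow_eq_add_tsum_nat_add_two
      (summable_mul_pow_of_abs_le hs (abs_le_abs_of_nonneg hz hzc))
  have tail_eq : ∑' i, a i * c ^ i - a 0 - c * a 1 = ∑' i, a (i + 2) * c ^ (i + 2) := by
    rw [series_split hc.le le_rfl]
    ring
  have tail_le := tsum_nat_add_mul_pow_sub_le two_ne_zero ha hs hy hyx hxy hc
  rw [tail_eq, series_split (hy.trans hyx) (by linarith), series_split hy (by linarith)]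
  linarith

end PowerSeries

section DecoyGain

variable {Y : ℕ → ℝ}

theorem decoyGain_mul_exp (Y : ℕ → ℝ) (m : ℝ) :
    decoyGain Y m * Real.exp m = ∑' i, Y i / i ! * m ^ i := by
  rw [decoyGain, ← tsum_mul_right]
  refine tsum_congr fun i ↦ ?_
  rw [Real.exp_neg]
  field_simp

theorem summable_div_factorial_mul_pow {C : ℝ} (hY : ∀ i, |Y i| ≤ C) (m : ℝ) :
    Summable fun i ↦ Y i / i ! * m ^ i := by
  refine Summable.of_norm_bounded ((Real.summable_pow_div_factorial |m|).mul_left C) fun i ↦ ?_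
  calc ‖Y i / i ! * m ^ i‖ = |Y i| * (|m| ^ i / i !) := by
        simp only [norm_mul, norm_div, norm_pow, Real.norm_eq_abs, Nat.abs_cast]
        ring
    _ ≤ C * (|m| ^ i / i !) := by
        gcongr
        exact hY i

theorem decoy_gain_difference_upper_bound_general {μ ν₁ ν₂ : ℝ} (hY : ∀ i, 2 ≤ i → 0 ≤ Y i)
    (hs : Summable fun i ↦ Y i / i ! * μ ^ i) (hν₂ : 0 ≤ ν₂) (hν : ν₂ ≤ ν₁)
    (hμ : ν₁ + ν₂ ≤ μ) (hμ_pos : 0 < μ) :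
    decoyGain Y ν₁ * Real.exp ν₁ - decoyGain Y ν₂ * Real.exp ν₂
      ≤ (ν₁ - ν₂) * Y 1
        + (ν₁ ^ 2 - ν₂ ^ 2) / μ ^ 2 *
          (decoyGain Y μ * Real.exp μ - Y 0 - μ * Y 1) := by
  have coeff_nonneg (i : ℕ) (hi : 2 ≤ i) : 0 ≤ Y i / i ! :=
    div_nonneg (hY i hi) (Nat.cast_nonneg _)
  simpa only [decoyGain_mul_exp, Nat.factorial_zero, Nat.factorial_one, Nat.cast_one, div_one]
    using tsum_mul_pow_sub_le coeff_nonneg hs hν₂ hν hμ hμ_pos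

end DecoyGain

theorem decoy_gain_difference_upper_bound (Y : ℕ → ℝ) (hY : ∀ i, 0 ≤ Y i ∧ Y i ≤ 1)
    (μ ν₁ ν₂ : ℝ) (hν₂ : 0 ≤ ν₂) (hν : ν₂ < ν₁) (hμ : ν₁ + ν₂ < μ) :
    decoyGain Y ν₁ * Real.exp ν₁ - decoyGain Y ν₂ * Real.exp ν₂
      ≤ (ν₁ - ν₂) * Y 1
        + (ν₁ ^ 2 - ν₂ ^ 2) / μ ^ 2 *
          (decoyGain Y μ * Real.exp μ - Y 0 - μ * Y 1) := by
  have abs_le_one (i : ℕ) : |Y i| ≤ 1 := (abs_of_nonneg (hY i).1).trans_le (hY i).2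
  exact decoy_gain_difference_upper_bound_general (fun i _ ↦ (hY i).1)
    (summable_div_factorial_mul_pow abs_le_one μ) hν₂ hν.le hμ.le (by linarith)
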